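/- For every ρ ∈ (0, 3) and every x_0 ∈ ℝ, the gradient-descent sequence with step-size 1 on f_ρ, defined by x_{t+1} = x_t − f_ρ'(x_t), converges (i.e. the sequence (x_t) has a limit in ℝ). -/

import Mathlib

/-- The piecewise function `f_ρ` from the paper's discussion of the logistic map
embedded in gradient descent with step-size 1. -/
noncomputable def frho (ρ : ℝ) (x : ℝ) : ℝ :=
  if |x| ≤ 1 then
    ρ / 3 * |x| ^ 3 + (1 - ρ) / 2 * x ^ 2 + (ρ - 1) ^ 3 / (6 * ρ ^ 2)
  else if |x| ≤ 3 / 2 then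
    -(ρ / 3) * |x| ^ 3 + (1 + 3 * ρ) / 2 * x ^ 2 - 2 * ρ * |x| +
      ((ρ - 1) ^ 3 + 4 * ρ ^ 3) / (6 * ρ ^ 2)
  else
    1 / 2 * x ^ 2 + ρ / 4 * |x| + (4 * (ρ - 1) ^ 3 - 11 * ρ ^ 3) / (24 * ρ ^ 2)

theorem q_hasDerivAt (y : ℝ) :
    HasDerivAt (fun y : ℝ => (max y 0) ^ 3) (3 * (max y 0) ^ 2) y := by
  rcases lt_trichotomy y 0 with h | h | h
  · have h1 : HasDerivAt (fun _ : ℝ => (0:ℝ)) 0 y := hasDerivAt_const y 0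
    have h2 : (fun y : ℝ => (max y 0) ^ 3) =ᶠ[nhds y] (fun _ => 0) := by
      filter_upwards [gt_mem_nhds h] with z hz
      rw [max_eq_right hz.le]; norm_num
    have := h1.congr_of_eventuallyEq h2
    rw [max_eq_right h.le]; simpa using this
  · subst h
    rw [hasDerivAt_iff_tendsto_slope]
    have hc : Filter.Tendsto (fun y : ℝ => (max y 0) ^ 2) (nhdsWithin 0 {0}ᶜ)
        (nhds (3 * (max (0:ℝ) 0) ^ 2)) := by
      have : Continuous (fun y : ℝ => (max y 0) ^ 2) := by fun_prop
      have h3 := (this.tendsto 0).mono_left (nhdsWithin_le_nhds (s := {0}ᶜ))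
      simpa using h3
    refine hc.congr' ?_
    filter_upwards [self_mem_nhdsWithin] with z hz
    have hz' : z ≠ 0 := hz
    rw [slope_def_field]
    rcases le_total z 0 with h | h
    · simp [max_eq_right h]
    · rw [max_eq_left h]; simp; field_simp
  · have h1 : HasDerivAt (fun y : ℝ => y ^ 3) (3 * y ^ 2) y := by
      simpa using hasDerivAt_pow 3 y
    have h2 : (fun y : ℝ => (max y 0) ^ 3) =ᶠ[nhds y] (fun y => y ^ 3) := by
      filter_upwards [lt_mem_nhds h] with z hz
      rw [max_eq_left (le_of_lt hz)]
    rw [max_eq_left h.le]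
    exact h1.congr_of_eventuallyEq h2

theorem frho_eq (ρ : ℝ) (hρ : 0 < ρ) (x : ℝ) : frho ρ x =
    ρ / 3 * ((max x 0) ^ 3 + (max (-x) 0) ^ 3) + (1 - ρ) / 2 * x ^ 2
      + (ρ - 1) ^ 3 / (6 * ρ ^ 2)
      - 2 * ρ / 3 * ((max (x - 1) 0) ^ 3 + (max (-x - 1) 0) ^ 3)
      + ρ / 3 * ((max (x - 3 / 2) 0) ^ 3 + (max (-x - 3 / 2) 0) ^ 3) := by
  unfold frho
  rcases le_total 0 x with h | h
  · rw [abs_of_nonneg h, max_eq_left h, max_eq_right (by linarith : -x ≤ 0),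
      max_eq_right (by linarith : -x - 1 ≤ 0), max_eq_right (by linarith : -x - 3 / 2 ≤ 0)]
    split_ifs with h1 h2
    · rw [max_eq_right (by linarith), max_eq_right (by linarith)]; ring
    · rw [max_eq_left (by linarith), max_eq_right (by linarith)]; field_simp; ring
    · rw [max_eq_left (by linarith), max_eq_left (by linarith)]; field_simp; ring
  · rw [abs_of_nonpos h, max_eq_right h, max_eq_left (by linarith : 0 ≤ -x),
      max_eq_right (by linarith : x - 1 ≤ 0), max_eq_right (by linarith : x - 3 / 2 ≤ 0)]
    split_ifs with h1 h2
    · rw [max_eq_right (by linarith), max_eq_right (by linarith)]; ring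
    · rw [max_eq_left (by linarith), max_eq_right (by linarith)]; field_simp; ring
    · rw [max_eq_left (by linarith), max_eq_left (by linarith)]; field_simp; ring

theorem frho_deriv (ρ : ℝ) (hρ : 0 < ρ) (x : ℝ) : deriv (frho ρ) x =
    ρ / 3 * (3 * (max x 0) ^ 2 - 3 * (max (-x) 0) ^ 2) + (1 - ρ) * x
      - 2 * ρ / 3 * (3 * (max (x - 1) 0) ^ 2 - 3 * (max (-x - 1) 0) ^ 2)
      + ρ / 3 * (3 * (max (x - 3 / 2) 0) ^ 2 - 3 * (max (-x - 3 / 2) 0) ^ 2) := by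
  have hp : ∀ c : ℝ, HasDerivAt (fun x : ℝ => (max (x - c) 0) ^ 3)
      (3 * (max (x - c) 0) ^ 2) x := fun c => by
    have := (q_hasDerivAt (x - c)).comp x ((hasDerivAt_id x).sub_const c)
    simpa [Function.comp_def] using this
  have hn : ∀ c : ℝ, HasDerivAt (fun x : ℝ => (max (-x - c) 0) ^ 3)
      (-(3 * (max (-x - c) 0) ^ 2)) x := fun c => by
    have := (q_hasDerivAt (-x - c)).comp x (((hasDerivAt_id x).neg).sub_const c)
    simpa [Function.comp_def] using this
  have hp0 := hp 0
  have hn0 := hn 0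
  simp only [sub_zero] at hp0 hn0
  have hs : HasDerivAt (fun x : ℝ => x ^ 2) (2 * x) x := by simpa using hasDerivAt_pow 2 x
  have H := ((((((hp0.add hn0).const_mul (ρ / 3)).add (hs.const_mul ((1 - ρ) / 2))).add_const
    ((ρ - 1) ^ 3 / (6 * ρ ^ 2))).sub (((hp 1).add (hn 1)).const_mul (2 * ρ / 3))).add
    (((hp (3/2)).add (hn (3/2))).const_mul (ρ / 3)))
  have H' := H.congr_of_eventuallyEq (f₁ := frho ρ)
    (Filter.Eventually.of_forall fun z => by rw [frho_eq ρ hρ z]; rfl)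
  rw [H'.deriv]; ring

/-- Gradient step on `[-1,1]`. -/
theorem step_in (ρ : ℝ) (hρ : 0 < ρ) (x : ℝ) (h : |x| ≤ 1) :
    x - deriv (frho ρ) x = ρ * x * (1 - |x|) := by
  obtain ⟨h1, h2⟩ := abs_le.1 h
  rw [frho_deriv ρ hρ, max_eq_right (by linarith : x - 1 ≤ 0),
    max_eq_right (by linarith : -x - 1 ≤ 0), max_eq_right (by linarith : x - 3/2 ≤ 0),
    max_eq_right (by linarith : -x - 3/2 ≤ 0)]
  rcases le_total 0 x with h | h
  · rw [abs_of_nonneg h, max_eq_left h, max_eq_right (by linarith : -x ≤ 0)]; ring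
  · rw [abs_of_nonpos h, max_eq_right h, max_eq_left (by linarith : 0 ≤ -x)]; ring

theorem step_bound (ρ : ℝ) (hρ : 0 < ρ) (x : ℝ) :
    |x - deriv (frho ρ) x| ≤ ρ / 4 := by
  rw [frho_deriv ρ hρ, abs_le]
  rcases le_total 0 x with h | h
  · rw [max_eq_left h, max_eq_right (by linarith : -x ≤ 0),
      max_eq_right (by linarith : -x - 1 ≤ 0), max_eq_right (by linarith : -x - 3 / 2 ≤ 0)]
    rcases le_total x 1 with h1 | h1
    · rw [max_eq_right (by linarith), max_eq_right (by linarith)]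
      constructor
      · nlinarith [mul_nonneg hρ.le (mul_nonneg h (sub_nonneg.2 h1))]
      · nlinarith [mul_nonneg hρ.le (sq_nonneg (x - 1/2))]
    · rcases le_total x (3/2) with h2 | h2
      · rw [max_eq_left (by linarith), max_eq_right (by linarith)]
        constructor
        · nlinarith [mul_nonneg hρ.le (sq_nonneg (x - 3/2))]
        · nlinarith [mul_nonneg hρ.le (mul_nonneg (sub_nonneg.2 h1) (by linarith : 0 ≤ 2 - x))]
      · rw [max_eq_left (by linarith), max_eq_left (by linarith)]
        constructor <;> nlinarith
  · rw [max_eq_right h, max_eq_left (by linarith : 0 ≤ -x),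
      max_eq_right (by linarith : x - 1 ≤ 0), max_eq_right (by linarith : x - 3 / 2 ≤ 0)]
    rcases le_total (-x) 1 with h1 | h1
    · rw [max_eq_right (by linarith), max_eq_right (by linarith)]
      constructor
      · nlinarith [mul_nonneg hρ.le (sq_nonneg (x + 1/2))]
      · nlinarith [mul_nonneg hρ.le (mul_nonneg (neg_nonneg.2 h) (sub_nonneg.2 h1))]
    · rcases le_total (-x) (3/2) with h2 | h2
      · rw [max_eq_left (by linarith), max_eq_right (by linarith)]
        constructor
        · nlinarith [mul_nonneg hρ.le (mul_nonneg (sub_nonneg.2 h1) (by linarith : 0 ≤ 2 + x))]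
        · nlinarith [mul_nonneg hρ.le (sq_nonneg (x + 3/2))]
      · rw [max_eq_left (by linarith), max_eq_left (by linarith)]
        constructor <;> nlinarith

theorem two_step_tendsto (d : ℕ → ℝ) (k : ℝ) (hk0 : 0 ≤ k) (hk : k < 1)
    (h : ∀ t, |d (t + 2)| ≤ k * |d t|) : Filter.Tendsto d Filter.atTop (nhds 0) := by
  have key : ∀ n : ℕ, |d (2 * n)| ≤ k ^ n * (|d 0| + |d 1|) ∧
      |d (2 * n + 1)| ≤ k ^ n * (|d 0| + |d 1|) := by
    intro n
    induction n with
    | zero => constructor <;> simp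
    | succ n ih =>
      have h1 := h (2 * n)
      have h2 := h (2 * n + 1)
      constructor
      · calc |d (2 * (n + 1))| ≤ k * |d (2 * n)| := h1
          _ ≤ k * (k ^ n * (|d 0| + |d 1|)) := mul_le_mul_of_nonneg_left ih.1 hk0
          _ = _ := by ring
      · calc |d (2 * (n + 1) + 1)| ≤ k * |d (2 * n + 1)| := h2
          _ ≤ k * (k ^ n * (|d 0| + |d 1|)) := mul_le_mul_of_nonneg_left ih.2 hk0
          _ = _ := by ring
  have hdiv : Filter.Tendsto (fun t : ℕ => t / 2) Filter.atTop Filter.atTop :=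
    Nat.tendsto_div_const_atTop (by norm_num)
  have hlim : Filter.Tendsto (fun t : ℕ => k ^ (t / 2) * (|d 0| + |d 1|))
      Filter.atTop (nhds 0) := by
    have := ((tendsto_pow_atTop_nhds_zero_of_lt_one hk0 hk).comp hdiv).mul_const
      (|d 0| + |d 1|)
    simpa [Function.comp_def] using this
  refine squeeze_zero_norm (fun t => ?_) hlim
  rw [Real.norm_eq_abs]
  rcases Nat.even_or_odd' t with ⟨n, rfl | rfl⟩
  · have : 2 * n / 2 = n := by omega
    rw [this]; exact (key n).1
  · have : (2 * n + 1) / 2 = n := by omega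
    rw [this]; exact (key n).2

theorem logistic_conv (ρ : ℝ) (h0 : 0 < ρ) (h3 : ρ < 3) (y : ℕ → ℝ)
    (hy0 : 0 ≤ y 0) (hy1 : y 0 ≤ ρ / 4) (hrec : ∀ t, y (t + 1) = ρ * y t * (1 - y t)) :
    ∃ l : ℝ, Filter.Tendsto y Filter.atTop (nhds l) := by
  have hb : ∀ t, 0 ≤ y t ∧ y t ≤ ρ / 4 := by
    intro t
    induction t with
    | zero => exact ⟨hy0, hy1⟩
    | succ t ih =>
      rw [hrec]
      refine ⟨mul_nonneg (mul_nonneg h0.le ih.1) (by linarith [ih.2]), ?_⟩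
      nlinarith [mul_nonneg h0.le (sq_nonneg (y t - 1/2))]
  rcases le_or_gt ρ 1 with h1 | h1
  · have hanti : Antitone y := antitone_nat_of_succ_le fun t => by
      rw [hrec]
      nlinarith [hb t, mul_nonneg h0.le (sq_nonneg (y t)),
        mul_nonneg (hb t).1 (sub_nonneg.2 h1)]
    exact ⟨_, tendsto_atTop_ciInf hanti ⟨0, by rintro _ ⟨t, rfl⟩; exact (hb t).1⟩⟩
  rcases hy0.eq_or_lt with hz | hpos
  · have : ∀ t, y t = 0 := by
      intro t
      induction t with
      | zero => exact hz.symm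
      | succ t ih => rw [hrec, ih]; ring
    refine ⟨0, ?_⟩
    rw [show y = fun _ => 0 from funext this]
    exact tendsto_const_nhds
  · obtain ⟨p, hp⟩ : ∃ p, p = 1 - 1 / ρ := ⟨_, rfl⟩
    have hρp : ρ * p = ρ - 1 := by rw [hp]; field_simp
    have hppos : 0 < p := by
      by_contra hcon
      nlinarith [mul_nonneg h0.le (sub_nonneg.2 (not_lt.1 hcon))]
    obtain ⟨w, hw⟩ : ∃ w, w = ρ * (ρ / 4) * (1 - ρ / 4) := ⟨_, rfl⟩
    have hwpos : 0 < w := by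
      rw [hw]; exact mul_pos (by positivity) (by linarith)
    obtain ⟨m, hm⟩ : ∃ m, m = min (y 0) (min p w) := ⟨_, rfl⟩
    have hmpos : 0 < m := by rw [hm]; exact lt_min hpos (lt_min hppos hwpos)
    have hmy : m ≤ y 0 := by rw [hm]; exact min_le_left _ _
    have hmp : m ≤ p := by rw [hm]; exact (min_le_right _ _).trans (min_le_left _ _)
    have hmw : m ≤ w := by rw [hm]; exact (min_le_right _ _).trans (min_le_right _ _)
    have hgm : m ≤ ρ * m * (1 - m) := by
      nlinarith [mul_nonneg (mul_nonneg h0.le hmpos.le) (sub_nonneg.2 hmp)]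
    have hlow : ∀ t, m ≤ y t := by
      intro t
      induction t with
      | zero => exact hmy
      | succ t ih =>
        rw [hrec]
        obtain ⟨ha, hb'⟩ := hb t
        rcases le_total (y t + m) 1 with hc | hc
        · nlinarith [mul_nonneg h0.le (mul_nonneg (sub_nonneg.2 ih) (sub_nonneg.2 hc))]
        · have : 0 ≤ y t + ρ / 4 - 1 := by linarith
          have := mul_nonneg h0.le (mul_nonneg (sub_nonneg.2 hb') this)
          rw [hw] at hmw
          nlinarith
    have hstep : ∀ t, y (t + 1) - p = (y t - p) * (1 - ρ * y t) := by
      intro t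
      rw [hrec]
      linear_combination -(y t) * hρp
    obtain ⟨a, ha⟩ : ∃ a, a = ρ * m * ((1 + ρ) * (3 - ρ) / 4) := ⟨_, rfl⟩
    have hapos : 0 < a := by
      rw [ha]
      have : 0 < 3 - ρ := by linarith
      positivity
    have hd := two_step_tendsto (fun t => y t - p) (max (1 - a) (1/2))
      (le_max_of_le_right (by norm_num)) (max_lt (by linarith) (by norm_num)) (by
        intro t
        have e : y (t + 2) - p = ((1 - ρ * y t) * (1 - ρ * (ρ * y t) + (ρ * y t) ^ 2))
            * (y t - p) := by
          rw [hstep (t + 1), hstep t, hrec]; ring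
        show |y (t + 2) - p| ≤ _ * |y t - p|
        rw [e, abs_mul]
        refine mul_le_mul_of_nonneg_right ?_ (abs_nonneg _)
        obtain ⟨u, hu⟩ : ∃ u, u = ρ * y t := ⟨_, rfl⟩
        have hu1 : ρ * m ≤ u := by rw [hu]; exact mul_le_mul_of_nonneg_left (hlow t) h0.le
        have hu0 : 0 < u := lt_of_lt_of_le (mul_pos h0 hmpos) hu1
        have hu2 : 4 * u ≤ 3 * ρ := by
          rw [hu]; nlinarith [mul_le_mul_of_nonneg_left (hb t).2 h0.le]
        rw [← hu, abs_le]
        constructor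
        · have hF : 1/2 ≤ 1 + (1 - u) * (1 - ρ * u + u ^ 2) := by
            rcases le_total u 1 with hc | hc
            · have : 0 ≤ (3 - ρ) * (u * (1 - u)) :=
                mul_nonneg (by linarith) (mul_nonneg hu0.le (by linarith))
              nlinarith [mul_nonneg (sub_nonneg.2 hc) (sq_nonneg (u - 2/3)), sq_nonneg (u - 2/3)]
            · have : 0 ≤ (3 * ρ - 4 * u) * (u * (u - 1)) :=
                mul_nonneg (by linarith) (mul_nonneg hu0.le (by linarith))
              nlinarith [mul_nonneg hu0.le (sq_nonneg (u - 7/5)), sq_nonneg (u - 7/5)]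
          have : (1/2 : ℝ) ≤ max (1 - a) (1/2) := le_max_right _ _
          linarith
        · refine le_trans ?_ (le_max_left _ _)
          have h5 : 0 ≤ (1 + ρ) * (3 - ρ) / 4 := by
            have : 0 < 3 - ρ := by linarith
            positivity
          have h6 := mul_le_mul_of_nonneg_right hu1 h5
          rw [ha]
          nlinarith [mul_nonneg hu0.le (sq_nonneg (u - (1 + ρ) / 2))])
    refine ⟨p, ?_⟩
    simpa using hd.add_const p

/-- For every `ρ ∈ (0, 3)` and every initial point `x₀ ∈ ℝ`,
the gradient-descent sequence with step-size 1 on `f_ρ` converges. -/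
theorem frho_gd_converges (ρ : ℝ) (hρ : ρ ∈ Set.Ioo (0 : ℝ) 3)
    (x0 : ℝ) (x : ℕ → ℝ) (hx0 : x 0 = x0)
    (hrec : ∀ t, x (t + 1) = x t - deriv (frho ρ) (x t)) :
    ∃ l : ℝ, Filter.Tendsto x Filter.atTop (nhds l) := by
  obtain ⟨h0, h3⟩ := hρ
  have hb : ∀ t, |x (t + 1)| ≤ ρ / 4 := fun t => by
    rw [hrec]; exact step_bound ρ h0 _
  have hs : ∀ t, x (t + 1 + 1) = ρ * x (t + 1) * (1 - |x (t + 1)|) := fun t => by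
    rw [hrec (t + 1)]; exact step_in ρ h0 _ ((hb t).trans (by linarith))
  rcases le_total 0 (x 1) with h | h
  · have hn : ∀ t, 0 ≤ x (t + 1) := by
      intro t
      induction t with
      | zero => exact h
      | succ t ih =>
        rw [hs]; exact mul_nonneg (mul_nonneg h0.le ih) (by linarith [hb t])
    obtain ⟨l, hl⟩ := logistic_conv ρ h0 h3 (fun t => x (t + 1)) h
      ((le_abs_self _).trans (hb 0)) (fun t => by
        show x (t + 1 + 1) = _
        rw [hs, abs_of_nonneg (hn t)])
    exact ⟨l, (Filter.tendsto_add_atTop_iff_nat 1).1 hl⟩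
  · have hn : ∀ t, x (t + 1) ≤ 0 := by
      intro t
      induction t with
      | zero => exact h
      | succ t ih =>
        rw [hs]
        exact mul_nonpos_of_nonpos_of_nonneg (mul_nonpos_of_nonneg_of_nonpos h0.le ih)
          (by linarith [hb t])
    obtain ⟨l, hl⟩ := logistic_conv ρ h0 h3 (fun t => -x (t + 1)) (neg_nonneg.2 h)
      ((neg_le_abs _).trans (hb 0)) (fun t => by
        show -x (t + 1 + 1) = _
        rw [hs, abs_of_nonpos (hn t)]; ring)
    refine ⟨-l, (Filter.tendsto_add_atTop_iff_nat 1).1 ?_⟩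
    simpa using hl.neg
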